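/- Let G be a group and N ◁ G a normal subgroup such that N is sofic and the quotient group G/N satisfies the Følner condition. Then G is sofic. -/

import Mathlib

/-- Two self-maps of a finite set `A` are `ε`-similar if the number of points where they
differ is at most `ε·|A|`. They are `(1-ε)`-different if they are not `(1-ε)`-similar. -/
def EpsSimilar {A : Type*} [Fintype A] (ε : ℝ) (e f : A → A) : Prop :=
  (Nat.card {a : A // e a ≠ f a} : ℝ) ≤ ε * Fintype.card A

/-- An `(F, ε)`-quasi-action of a group `G` on a finite set `A`:
(a) `φ(ef)` is `ε`-similar to `φ(e)` followed by `φ(f)` for `e, f ∈ F`;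
(b) `φ(1)` is `ε`-similar to the identity;
(c) for `1 ≠ e ∈ F`, `φ(e)` is `(1-ε)`-different from the identity. -/
def IsQuasiAction {G : Type*} [Group G] (F : Finset G) (ε : ℝ)
    {A : Type*} [Fintype A] (φ : G → A → A) : Prop :=
  (∀ e ∈ F, ∀ f ∈ F, EpsSimilar ε (φ (e * f)) (fun a => φ f (φ e a))) ∧
  EpsSimilar ε (φ 1) id ∧
  (∀ e ∈ F, e ≠ 1 → ¬ EpsSimilar (1 - ε) (φ e) id)

/-- A group `G` is sofic if for every finite subset `F ⊆ G` and every `ε ∈ (0,1)` there is an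
`(F, ε)`-quasi-action of `G` on some finite nonempty set. -/
def IsSofic (G : Type*) [Group G] : Prop :=
  ∀ (F : Finset G) (ε : ℝ), 0 < ε → ε < 1 →
    ∃ (A : Type) (_ : Fintype A) (_ : Nonempty A) (φ : G → A → A),
      IsQuasiAction F ε φ

/-- A group `M` satisfies the Følner condition (is amenable as a discrete group) if for every
finite `F ⊆ M` and every `ε > 0` there is a nonempty finite `A ⊆ M` with
`|A·g \ A| ≤ ε·|A|` for all `g ∈ F`. -/
def FolnerCondition (M : Type*) [Group M] : Prop :=
  ∀ (F : Finset M) (ε : ℝ), 0 < ε →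
    ∃ A : Finset M, A.Nonempty ∧
      ∀ g ∈ F, ((((fun a => a * g) '' (A : Set M)) \ (A : Set M)).ncard : ℝ) ≤ ε * A.card

/-!
A section `σ : G ⧸ N → G` gives the cocycle `c q g = σ(q) g σ(q g)⁻¹ ∈ N`. For a quasi-action `ψ`
of `N` on `B` and a Følner set `A ⊆ G ⧸ N`, let `g` act on `B × A` by
`(b, q) ↦ (ψ (c q g) b, q g)` whenever `q g ∈ A`. The Følner condition makes the remaining `q`
rare, and over every other `q` the multiplicativity defect of this map is that of `ψ`. An element
outside `N` moves every such `q`, while for `1 ≠ g ∈ N` the element `c q g = σ(q) g σ(q)⁻¹` is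
nontrivial and so moves most points of `B`.
-/

section Counting

variable {A B : Type*} [Fintype A]

theorem ncard_eq_sum_ncard_fiber [Finite B] (P : Set (B × A)) :
    P.ncard = ∑ q, {b | (b, q) ∈ P}.ncard := by
  let fibers : P ≃ Σ q : A, {b | (b, q) ∈ P} :=
    { toFun := fun x => ⟨x.1.2, x.1.1, x.2⟩
      invFun := fun y => ⟨(y.2, y.1), y.2.2⟩ }
  simp only [← Nat.card_coe_set_eq, Nat.card_congr fibers, Nat.card_sigma]

theorem ncard_le_of_forall_ncard_fiber_le [Fintype B] {P : Set (B × A)} {S : Set A} {s δ : ℝ}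
    (hδ : 0 ≤ δ) (hS : S.ncard ≤ s * Fintype.card A)
    (hP : ∀ q ∉ S, ({b | (b, q) ∈ P}.ncard : ℝ) ≤ δ * Fintype.card B) :
    P.ncard ≤ (s + δ) * Fintype.card (B × A) := by
  classical
  have hfiber (q : A) : ({b | (b, q) ∈ P}.ncard : ℝ) ≤
      (if q ∈ S then (Fintype.card B : ℝ) else 0) + δ * Fintype.card B := by
    split_ifs with hq
    · have hle : ({b | (b, q) ∈ P}.ncard : ℝ) ≤ Fintype.card B := by
        exact_mod_cast Nat.card_eq_fintype_card (α := B) ▸ Set.ncard_le_card _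
      exact hle.trans (le_add_of_nonneg_right (by positivity))
    · simpa only [zero_add] using hP q hq
  have hsum : ∑ q : A, (if q ∈ S then (Fintype.card B : ℝ) else 0) =
      S.ncard * Fintype.card B := by
    rw [← Finset.sum_filter, Finset.sum_const, nsmul_eq_mul, Set.ncard_eq_toFinset_card',
      Set.filter_mem_univ_eq_toFinset]
  calc (P.ncard : ℝ) = ∑ q, ({b | (b, q) ∈ P}.ncard : ℝ) := by
        rw [ncard_eq_sum_ncard_fiber, Nat.cast_sum]
    _ ≤ ∑ q, ((if q ∈ S then (Fintype.card B : ℝ) else 0) + δ * Fintype.card B) :=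
        Finset.sum_le_sum fun q _ => hfiber q
    _ = S.ncard * Fintype.card B + Fintype.card A * (δ * Fintype.card B) := by
        rw [Finset.sum_add_distrib, hsum, Finset.sum_const, Finset.card_univ, nsmul_eq_mul]
    _ ≤ s * Fintype.card A * Fintype.card B + Fintype.card A * (δ * Fintype.card B) := by
        gcongr
    _ = (s + δ) * Fintype.card (B × A) := by
        rw [Fintype.card_prod, Nat.cast_mul]
        ring

end Counting

section EpsSimilar

variable {A A' : Type*} [Fintype A] [Fintype A'] {e f : A → A} {ε ε' : ℝ}

theorem epsSimilar_iff_ncard_le :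
    EpsSimilar ε e f ↔ ({a | e a ≠ f a}.ncard : ℝ) ≤ ε * Fintype.card A :=
  Iff.rfl

theorem not_epsSimilar_one_sub_iff_ncard_lt :
    ¬ EpsSimilar (1 - ε) e f ↔ ({a | e a = f a}.ncard : ℝ) < ε * Fintype.card A := by
  have hcard : ({a | e a = f a}.ncard : ℝ) + {a | e a ≠ f a}.ncard = Fintype.card A := by
    rw [← Nat.card_eq_fintype_card]
    exact_mod_cast Set.ncard_add_ncard_compl {a | e a = f a}
  rw [epsSimilar_iff_ncard_le, not_le, sub_mul, one_mul]
  constructor <;> intro h <;> linarith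

theorem EpsSimilar.mono (h : EpsSimilar ε e f) (hε : ε ≤ ε') : EpsSimilar ε' e f :=
  h.trans (by gcongr)

theorem epsSimilar_conj_iff (E : A ≃ A') :
    EpsSimilar ε (E.conj e) (E.conj f) ↔ EpsSimilar ε e f := by
  have hcard : Nat.card {a // E.conj e a ≠ E.conj f a} = Nat.card {a // e a ≠ f a} :=
    Nat.card_congr (E.symm.subtypeEquiv fun a => by simp only [Equiv.conj_apply, ne_eq,
      EmbeddingLike.apply_eq_iff_eq])
  rw [EpsSimilar, EpsSimilar, hcard, Fintype.card_congr E]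

end EpsSimilar

section Transport

universe v

variable {G : Type*} [Group G]

theorem IsQuasiAction.conj {A A' : Type*} [Fintype A] [Fintype A'] {F : Finset G} {ε : ℝ}
    {φ : G → A → A} (h : IsQuasiAction F ε φ) (E : A ≃ A') :
    IsQuasiAction F ε fun g => E.conj (φ g) := by
  obtain ⟨hmul, hone, hne⟩ := h
  have hid : E.conj id = id := funext fun x => E.apply_symm_apply x
  refine ⟨fun g hg k hk => ?_, ?_, fun g hg hg1 => ?_⟩
  · have hcomp : (fun a => E.conj (φ k) (E.conj (φ g) a)) = E.conj fun a => φ k (φ g a) :=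
      (E.conj_comp (φ k) (φ g)).symm
    rw [hcomp, epsSimilar_conj_iff]
    exact hmul g hg k hk
  · rwa [← hid, epsSimilar_conj_iff]
  · rw [← hid, epsSimilar_conj_iff]
    exact hne g hg hg1

theorem IsSofic.of_forall_exists_isQuasiAction
    (h : ∀ (F : Finset G) (ε : ℝ), 0 < ε → ε < 1 →
      ∃ (A : Type v) (_ : Fintype A) (_ : Nonempty A) (φ : G → A → A), IsQuasiAction F ε φ) :
    IsSofic G := by
  intro F ε hε hε1
  obtain ⟨A, _, _, φ, hφ⟩ := h F ε hε hε1
  have E := Fintype.equivFin A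
  exact ⟨Fin (Fintype.card A), inferInstance, E.symm.nonempty, _, hφ.conj E⟩

end Transport

section Folner

theorem ncard_mul_right_notMem_eq {M : Type*} [Mul M] [IsRightCancelMul M] (A : Finset M) (g : M) :
    {q : A | (q : M) * g ∉ A}.ncard = (((fun a => a * g) '' (A : Set M)) \ A).ncard := by
  have hinj : Function.Injective fun q : A => (q : M) * g :=
    (mul_left_injective g).comp Subtype.val_injective
  rw [← Set.ncard_image_of_injective _ hinj]
  congr 1
  ext x
  constructor
  · rintro ⟨q, hq, rfl⟩
    exact ⟨⟨q, q.2, rfl⟩, hq⟩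
  · rintro ⟨⟨q, hq, rfl⟩, hqg⟩
    exact ⟨⟨q, hq⟩, hqg, rfl⟩

theorem FolnerCondition.exists_ncard_mul_right_notMem_le {M : Type*} [Group M]
    (hM : FolnerCondition M) (F : Finset M) {ε : ℝ} (hε : 0 < ε) :
    ∃ A : Finset M, A.Nonempty ∧
      ∀ g ∈ F, ({q : A | (q : M) * g ∉ A}.ncard : ℝ) ≤ ε * Fintype.card A := by
  simpa only [ncard_mul_right_notMem_eq, Fintype.card_coe] using hM F ε hε

end Folner

section Induced

variable {G : Type*} [Group G] (N : Subgroup G) [N.Normal]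

/-- The `N`-valued cocycle of the section `Quotient.out` of `G → G ⧸ N`, for the right
multiplication action of `G` on `G ⧸ N`. -/
noncomputable def sectionCocycle (q : G ⧸ N) (g : G) : N :=
  ⟨q.out * g * (q * (g : G ⧸ N)).out⁻¹, by simp [← QuotientGroup.eq_one_iff]⟩

theorem sectionCocycle_mul (q : G ⧸ N) (g h : G) :
    sectionCocycle N q (g * h) = sectionCocycle N q g * sectionCocycle N (q * (g : G ⧸ N)) h := by
  ext
  simp [sectionCocycle, mul_assoc]

theorem sectionCocycle_one (q : G ⧸ N) : sectionCocycle N q 1 = 1 := by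
  ext
  simp [sectionCocycle]

theorem sectionCocycle_eq_one_iff {q : G ⧸ N} {g : G} (hg : (g : G ⧸ N) = 1) :
    sectionCocycle N q g = 1 ↔ g = 1 := by
  simp [sectionCocycle, hg]

open Classical in
/-- The quasi-action of `G` on `B × A` induced from a quasi-action `ψ` of `N` on `B`, where `A` is
a finite set of cosets: `g` sends `(b, q)` to `(ψ (c q g) b, q g)`, with `c` the section cocycle.
Points whose coset would leave `A` are fixed. -/
noncomputable def inducedMap (A : Finset (G ⧸ N)) {B : Type*} (ψ : N → B → B) (g : G)
    (x : B × A) : B × A :=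
  if h : (x.2 : G ⧸ N) * (g : G ⧸ N) ∈ A then
    (ψ (sectionCocycle N x.2 g) x.1, ⟨(x.2 : G ⧸ N) * (g : G ⧸ N), h⟩)
  else x

variable {N} {A : Finset (G ⧸ N)} {B : Type*} {ψ : N → B → B} {g h : G} {q : A} {b : B}

theorem inducedMap_of_mem (hg : (q : G ⧸ N) * (g : G ⧸ N) ∈ A) :
    inducedMap N A ψ g (b, q) = (ψ (sectionCocycle N q g) b, ⟨(q : G ⧸ N) * (g : G ⧸ N), hg⟩) :=
  dif_pos hg

theorem inducedMap_mul_eq_iff (hg : (q : G ⧸ N) * (g : G ⧸ N) ∈ A)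
    (hgh : (q : G ⧸ N) * ((g * h : G) : G ⧸ N) ∈ A) :
    inducedMap N A ψ (g * h) (b, q) = inducedMap N A ψ h (inducedMap N A ψ g (b, q)) ↔
      ψ (sectionCocycle N q g * sectionCocycle N (q * (g : G ⧸ N)) h) b =
        ψ (sectionCocycle N (q * (g : G ⧸ N)) h) (ψ (sectionCocycle N q g) b) := by
  have hassoc : (q : G ⧸ N) * ((g * h : G) : G ⧸ N) = q * (g : G ⧸ N) * (h : G ⧸ N) := by
    rw [QuotientGroup.mk_mul, mul_assoc]
  rw [inducedMap_of_mem hg, inducedMap_of_mem hgh, inducedMap_of_mem (hassoc ▸ hgh),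
    sectionCocycle_mul]
  simp only [Prod.mk.injEq, hassoc, and_true]

theorem inducedMap_one_eq_self_iff : inducedMap N A ψ 1 (b, q) = (b, q) ↔ ψ 1 b = b := by
  have hq : (q : G ⧸ N) * ((1 : G) : G ⧸ N) = q := by rw [QuotientGroup.mk_one, mul_one]
  rw [inducedMap_of_mem (hq.symm ▸ q.2), sectionCocycle_one]
  simp only [hq, Subtype.coe_eta, Prod.mk.injEq, and_true]

theorem inducedMap_eq_self_iff (hg : (q : G ⧸ N) * (g : G ⧸ N) ∈ A) :
    inducedMap N A ψ g (b, q) = (b, q) ↔ ψ (sectionCocycle N q g) b = b ∧ (g : G ⧸ N) = 1 := by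
  rw [inducedMap_of_mem hg, Prod.mk.injEq, Subtype.ext_iff, mul_eq_left]

variable [Fintype B] {s t δ ε : ℝ}

theorem epsSimilar_inducedMap_mul (hδ : 0 ≤ δ)
    (hg : {q : A | (q : G ⧸ N) * (g : G ⧸ N) ∉ A}.ncard ≤ s * Fintype.card A)
    (hgh : {q : A | (q : G ⧸ N) * ((g * h : G) : G ⧸ N) ∉ A}.ncard ≤ t * Fintype.card A)
    (hψ : ∀ q ∈ A, q * (g : G ⧸ N) ∈ A →
      EpsSimilar δ (ψ (sectionCocycle N q g * sectionCocycle N (q * (g : G ⧸ N)) h))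
        (fun b => ψ (sectionCocycle N (q * (g : G ⧸ N)) h) (ψ (sectionCocycle N q g) b))) :
    EpsSimilar (s + t + δ) (inducedMap N A ψ (g * h))
      (fun x => inducedMap N A ψ h (inducedMap N A ψ g x)) := by
  rw [epsSimilar_iff_ncard_le]
  refine ncard_le_of_forall_ncard_fiber_le hδ
    (S := {q : A | (q : G ⧸ N) * (g : G ⧸ N) ∉ A} ∪
      {q : A | (q : G ⧸ N) * ((g * h : G) : G ⧸ N) ∉ A}) ?_ fun q hq => ?_
  · rw [add_mul]
    exact (mod_cast Set.ncard_union_le _ _ : _ ≤ _).trans (add_le_add hg hgh)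
  · simp only [Set.mem_union, Set.mem_ofPred_eq, not_or, not_not] at hq
    simpa only [Set.mem_ofPred_eq, ne_eq, inducedMap_mul_eq_iff hq.1 hq.2]
      using epsSimilar_iff_ncard_le.1 (hψ q q.2 hq.1)

theorem epsSimilar_inducedMap_one (hδ : 0 ≤ δ) (hψ : EpsSimilar δ (ψ 1) id) :
    EpsSimilar δ (inducedMap N A ψ 1) id := by
  rw [epsSimilar_iff_ncard_le, ← zero_add δ]
  refine ncard_le_of_forall_ncard_fiber_le hδ (S := ∅) (by simp) fun q _ => ?_
  simpa only [Set.mem_ofPred_eq, ne_eq, id_eq, inducedMap_one_eq_self_iff]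
    using epsSimilar_iff_ncard_le.1 hψ

theorem not_epsSimilar_inducedMap_id [Nonempty A] [Nonempty B] (hδ : 0 ≤ δ) (hε : s + δ < ε)
    (hne : g ≠ 1) (hg : {q : A | (q : G ⧸ N) * (g : G ⧸ N) ∉ A}.ncard ≤ s * Fintype.card A)
    (hψ : ∀ q ∈ A, sectionCocycle N q g ≠ 1 →
      ¬ EpsSimilar (1 - δ) (ψ (sectionCocycle N q g)) id) :
    ¬ EpsSimilar (1 - ε) (inducedMap N A ψ g) id := by
  rw [not_epsSimilar_one_sub_iff_ncard_lt]
  refine (ncard_le_of_forall_ncard_fiber_le (δ := δ) hδ hg fun q hq => ?_).trans_lt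
    (by gcongr)
  simp only [Set.mem_ofPred_eq, not_not] at hq
  simp only [Set.mem_ofPred_eq, id_eq, inducedMap_eq_self_iff hq]
  by_cases hgN : (g : G ⧸ N) = 1
  · have hmove := hψ q q.2 ((sectionCocycle_eq_one_iff N hgN).not.2 hne)
    simpa only [hgN, and_true, id_eq] using (not_epsSimilar_one_sub_iff_ncard_lt.1 hmove).le
  · simp only [hgN, and_false, Set.ofPred_false, Set.ncard_empty, Nat.cast_zero]
    positivity

theorem isQuasiAction_inducedMap [Nonempty A] [Nonempty B] {F : Finset G} {T : Finset N}
    (hδ : 0 < δ)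
    (hF : ∀ g ∈ F, {q : A | (q : G ⧸ N) * (g : G ⧸ N) ∉ A}.ncard ≤ δ * Fintype.card A)
    (hFF : ∀ g ∈ F, ∀ h ∈ F,
      {q : A | (q : G ⧸ N) * ((g * h : G) : G ⧸ N) ∉ A}.ncard ≤ δ * Fintype.card A)
    (hT : ∀ q ∈ A, ∀ g ∈ F, sectionCocycle N q g ∈ T) (hψ : IsQuasiAction T δ ψ) :
    IsQuasiAction F (3 * δ) (inducedMap N A ψ) := by
  obtain ⟨hmul, hone, hne⟩ := hψ
  refine ⟨fun g hg h hh => ?_, ?_, fun g hg hg1 => ?_⟩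
  · refine (epsSimilar_inducedMap_mul hδ.le (hF g hg) (hFF g hg h hh) fun q hq hqg => ?_).mono
      (by linarith)
    exact hmul _ (hT q hq g hg) _ (hT _ hqg h hh)
  · exact (epsSimilar_inducedMap_one hδ.le hone).mono (by linarith)
  · exact not_epsSimilar_inducedMap_id hδ.le (by linarith) hg1 (hF g hg)
      fun q hq => hne _ (hT q hq g hg)

end Induced

/-- If `N ◁ G` is a sofic normal subgroup and the quotient `G/N` satisfies the Følner
condition (is amenable), then `G` is sofic. -/
theorem isSofic_of_normal_folner_quotient {G : Type*} [Group G] (N : Subgroup G) [N.Normal]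
    (hN : IsSofic N) (hQ : FolnerCondition (G ⧸ N)) : IsSofic G := by
  classical
  refine .of_forall_exists_isQuasiAction fun F ε hε hε1 => ?_
  obtain ⟨δ, rfl⟩ : ∃ δ, ε = 3 * δ := ⟨ε / 3, by ring⟩
  have hδ : 0 < δ := by linarith
  obtain ⟨A, hA, hFolner⟩ := hQ.exists_ncard_mul_right_notMem_le
    ((F ∪ Finset.image₂ (· * ·) F F).image ((↑) : G → G ⧸ N)) hδ
  obtain ⟨B, _, _, ψ, hψ⟩ := hN (Finset.image₂ (sectionCocycle N) A F) δ hδ (by linarith)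
  have : Nonempty A := hA.to_subtype
  refine ⟨B × A, inferInstance, inferInstance, inducedMap N A ψ,
    isQuasiAction_inducedMap hδ (fun g hg => hFolner g ?_) (fun g hg h hh => hFolner _ ?_)
      (fun q hq g hg => Finset.mem_image₂_of_mem hq hg) hψ⟩
  · exact Finset.mem_image_of_mem _ (Finset.mem_union_left _ hg)
  · exact Finset.mem_image_of_mem _ (Finset.mem_union_right _ (Finset.mem_image₂_of_mem hg hh))
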